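/- Let U ⊆ ℂ∖{0} be a nonempty open set closed under complex conjugation, and let ψ : ℝ³ × U → GL(n,ℂ) be smooth (coordinates (x,y,t,τ)). Suppose there exist smooth maps P, Q : ℝ³ → M_n(ℂ) such that for all τ ∈ U: τ∂_yψ − ∂_ξψ = Pψ and τ∂_ηψ − ∂_yψ = Qψ, and suppose ψ(x,y,t,τ̄)*ψ(x,y,t,τ) = 1 for all (x,y,t) and all τ ∈ U. Define A_t = A_x = −P/2, A_y = −Q/2, and φ = Q/2 (equivalently A_ξ = −P, A_η = 0, A_y = −φ = −Q/2). Then P and Q are anti-Hermitian-valued, so (A,φ) is a connection and Higgs field, and (A,φ) solves the space-time monopole equation. -/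

import Mathlib

open Matrix Complex
open scoped Matrix ComplexConjugate

attribute [local instance] Matrix.normedAddCommGroup Matrix.normedSpace

noncomputable section

/-- `n × n` complex matrices. -/
abbrev Mat (n : ℕ) := Matrix (Fin n) (Fin n) ℂ

/-- Space-time `ℝ³` with coordinates `(x, y, t)`. -/
abbrev P3 : Type := ℝ × ℝ × ℝ

section PartialDerivatives

variable {W : Type*} [NormedAddCommGroup W] [NormedSpace ℝ W]

/-- Partial derivative in `x`. -/
def pdx (f : P3 → W) (p : P3) : W := deriv (fun s => f (s, p.2.1, p.2.2)) p.1

/-- Partial derivative in `y`. -/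
def pdy (f : P3 → W) (p : P3) : W := deriv (fun s => f (p.1, s, p.2.2)) p.2.1

/-- Partial derivative in `t`. -/
def pdt (f : P3 → W) (p : P3) : W := deriv (fun s => f (p.1, p.2.1, s)) p.2.2

/-- Light-cone derivative `∂_ξ = ∂_t + ∂_x`. -/
def pdxi (f : P3 → W) (p : P3) : W := pdt f p + pdx f p

/-- Light-cone derivative `∂_η = ∂_t − ∂_x`. -/
def pdeta (f : P3 → W) (p : P3) : W := pdt f p - pdx f p

end PartialDerivatives

/-- `∂_z = ½(∂_x − i ∂_y)`. -/
def pdz {n : ℕ} (f : P3 → Mat n) (p : P3) : Mat n :=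
  (2⁻¹ : ℂ) • (pdx f p - Complex.I • pdy f p)

/-- `∂_z̄ = ½(∂_x + i ∂_y)`. -/
def pdzbar {n : ℕ} (f : P3 → Mat n) (p : P3) : Mat n :=
  (2⁻¹ : ℂ) • (pdx f p + Complex.I • pdy f p)

/-- Commutator `[X, Y] = XY − YX`. -/
def brk {n : ℕ} (X Y : Mat n) : Mat n := X * Y - Y * X

/-- Anti-Hermitian-valued map. -/
def SkewHerm {n : ℕ} (f : P3 → Mat n) : Prop := ∀ p : P3, (f p)ᴴ = -(f p)

/-- The space-time monopole equation `F_{xy} = −∇_tφ`, `F_{xt} = −∇_yφ`, `F_{yt} = ∇_xφ`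
for the connection `(Ax, Ay, At)` and Higgs field `Ph`, at the point `p`. -/
def MonopoleEqAt {n : ℕ} (Ax Ay At Ph : P3 → Mat n) (p : P3) : Prop :=
  (-(pdx Ay p) + pdy Ax p + brk (Ax p) (Ay p) = -(pdt Ph p - brk (At p) (Ph p))) ∧
  (-(pdx At p) + pdt Ax p + brk (Ax p) (At p) = -(pdy Ph p - brk (Ay p) (Ph p))) ∧
  (-(pdy At p) + pdt Ay p + brk (Ay p) (At p) = pdx Ph p - brk (Ax p) (Ph p))

/-- The space-time monopole equation on all of `ℝ³`. -/
def MonopoleEq {n : ℕ} (Ax Ay At Ph : P3 → Mat n) : Prop :=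
  ∀ p : P3, MonopoleEqAt Ax Ay At Ph p

/-- `E` solves the `μ`-linear system for `(A, φ)`. -/
def SolvesMu {n : ℕ} (Ax Ay At Ph : P3 → Mat n) (μ : ℂ) (E : P3 → Mat n) : Prop :=
  ∀ p : P3,
    (2⁻¹ : ℂ) • pdt E p + μ • pdz E p =
      ((2⁻¹ : ℂ) • (At p + Complex.I • Ph p) +
        μ • ((2⁻¹ : ℂ) • (Ax p - Complex.I • Ay p))) * E p ∧
    (2⁻¹ : ℂ) • pdt E p + μ⁻¹ • pdzbar E p =
      ((2⁻¹ : ℂ) • (At p - Complex.I • Ph p) +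
        μ⁻¹ • ((2⁻¹ : ℂ) • (Ax p + Complex.I • Ay p))) * E p

/-- `F` solves the `λ`-linear system for `(A, φ)`. -/
def SolvesLam {n : ℕ} (Ax Ay At Ph : P3 → Mat n) (lm : ℂ) (F : P3 → Mat n) : Prop :=
  ∀ p : P3,
    lm • pdxi F p - pdy F p = (lm • (At p + Ax p) - (Ay p + Ph p)) * F p ∧
    lm⁻¹ • pdeta F p - pdy F p = (lm⁻¹ • (At p - Ax p) - (Ay p - Ph p)) * F p

-- HELPERS
/-- Directional derivative. -/
def dd {W : Type*} [NormedAddCommGroup W] [NormedSpace ℝ W] (v : P3) (f : P3 → W) (p : P3) : W := fderiv ℝ f p v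

lemma pdx_eq_dd {W : Type*} [NormedAddCommGroup W] [NormedSpace ℝ W] {f : P3 → W} (hf : Differentiable ℝ f) (p : P3) :
    pdx f p = dd (1, 0, 0) f p := by
  have h1 : HasDerivAt (fun s : ℝ => ((s, p.2.1, p.2.2) : P3)) (1, 0, 0) p.1 :=
    (hasDerivAt_id p.1).prodMk ((hasDerivAt_const _ _).prodMk (hasDerivAt_const _ _))
  exact ((hf p).hasFDerivAt.comp_hasDerivAt (x := p.1) (f := fun s : ℝ => ((s, p.2.1, p.2.2) : P3)) h1).deriv

lemma pdy_eq_dd {W : Type*} [NormedAddCommGroup W] [NormedSpace ℝ W] {f : P3 → W} (hf : Differentiable ℝ f) (p : P3) :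
    pdy f p = dd (0, 1, 0) f p := by
  have h1 : HasDerivAt (fun s : ℝ => ((p.1, s, p.2.2) : P3)) (0, 1, 0) p.2.1 :=
    (hasDerivAt_const _ _).prodMk ((hasDerivAt_id p.2.1).prodMk (hasDerivAt_const _ _))
  exact ((hf p).hasFDerivAt.comp_hasDerivAt (x := p.2.1) (f := fun s : ℝ => ((p.1, s, p.2.2) : P3)) h1).deriv

lemma pdt_eq_dd {W : Type*} [NormedAddCommGroup W] [NormedSpace ℝ W] {f : P3 → W} (hf : Differentiable ℝ f) (p : P3) :
    pdt f p = dd (0, 0, 1) f p := by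
  have h1 : HasDerivAt (fun s : ℝ => ((p.1, p.2.1, s) : P3)) (0, 0, 1) p.2.2 :=
    (hasDerivAt_const _ _).prodMk ((hasDerivAt_const _ _).prodMk (hasDerivAt_id p.2.2))
  exact ((hf p).hasFDerivAt.comp_hasDerivAt (x := p.2.2) (f := fun s : ℝ => ((p.1, p.2.1, s) : P3)) h1).deriv

/-- Matrix multiplication as a continuous bilinear map. -/
def mulB (n : ℕ) : Mat n →L[ℝ] Mat n →L[ℝ] Mat n :=
  LinearMap.toContinuousLinearMap
    ((LinearMap.toContinuousLinearMap : (Mat n →ₗ[ℝ] Mat n) ≃ₗ[ℝ] _).toLinearMap ∘ₗ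
      LinearMap.mul ℝ (Mat n))

lemma dd_mul {n : ℕ} {f g : P3 → Mat n} (hf : Differentiable ℝ f) (hg : Differentiable ℝ g)
    (v p : P3) : dd v (fun r => f r * g r) p = dd v f p * g p + f p * dd v g p := by
  have h := (mulB n).hasFDerivAt_of_bilinear (hf p).hasFDerivAt (hg p).hasFDerivAt
  have h2 := congrArg (fun L => L v) h.fderiv
  rw [add_comm]
  exact h2

lemma dd_star {n : ℕ} {f : P3 → Mat n} (hf : Differentiable ℝ f)
    (v p : P3) : Differentiable ℝ (fun r => (f r)ᴴ) ∧ dd v (fun r => (f r)ᴴ) p = (dd v f p)ᴴ := by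
  let C : Mat n →L[ℝ] Mat n := LinearMap.toContinuousLinearMap
    (Matrix.conjTransposeLinearEquiv (Fin n) (Fin n) ℝ ℂ).toLinearMap
  have h : ∀ q, HasFDerivAt (fun r => (f r)ᴴ) (C ∘L fderiv ℝ f q) q := fun q =>
    C.hasFDerivAt.comp q (hf q).hasFDerivAt
  exact ⟨fun q => (h q).differentiableAt, congrArg (fun L => L v) (h p).fderiv⟩

lemma dd_smul {W : Type*} [NormedAddCommGroup W] [NormedSpace ℝ W] [Module ℂ W] [SMulCommClass ℝ ℂ W]
    [ContinuousConstSMul ℂ W] {f : P3 → W} (hf : Differentiable ℝ f) (c : ℂ)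
    (v p : P3) : dd v (fun r => c • f r) p = c • dd v f p :=
  congrArg (fun L => L v) ((hf p).hasFDerivAt.const_smul c).fderiv

lemma dd_neg {W : Type*} [NormedAddCommGroup W] [NormedSpace ℝ W] {f : P3 → W} (v p : P3) : dd v (fun r => - f r) p = - dd v f p := by
  unfold dd
  rw [fderiv_fun_neg]
  rfl

lemma dd_sub {W : Type*} [NormedAddCommGroup W] [NormedSpace ℝ W] {f g : P3 → W} (hf : Differentiable ℝ f) (hg : Differentiable ℝ g)
    (v p : P3) : dd v (fun r => f r - g r) p = dd v f p - dd v g p :=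
  congrArg (fun L => L v) ((hf p).hasFDerivAt.sub (hg p).hasFDerivAt).fderiv

lemma dd_add {W : Type*} [NormedAddCommGroup W] [NormedSpace ℝ W] {f g : P3 → W} (hf : Differentiable ℝ f) (hg : Differentiable ℝ g)
    (v p : P3) : dd v (fun r => f r + g r) p = dd v f p + dd v g p :=
  congrArg (fun L => L v) ((hf p).hasFDerivAt.add (hg p).hasFDerivAt).fderiv

lemma dd_diff {W : Type*} [NormedAddCommGroup W] [NormedSpace ℝ W] {f : P3 → W} (hf : ContDiff ℝ (⊤ : ℕ∞) f) (v : P3) :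
    Differentiable ℝ (dd v f) := by
  have h : ContDiff ℝ 1 (fderiv ℝ f) := hf.fderiv_right (by norm_cast)
  exact (h.differentiable (by simp)).clm_apply (differentiable_const v)

lemma dd_comm {W : Type*} [NormedAddCommGroup W] [NormedSpace ℝ W] {f : P3 → W} (hf : ContDiff ℝ (⊤ : ℕ∞) f) (v w p : P3) :
    dd v (dd w f) p = dd w (dd v f) p := by
  have h : ContDiff ℝ 1 (fderiv ℝ f) := hf.fderiv_right (by norm_cast)
  have hd := h.differentiable (by simp)
  have key : ∀ a b : P3, dd a (dd b f) p = fderiv ℝ (fderiv ℝ f) p a b := by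
    intro a b
    have := (hd p).hasFDerivAt.clm_apply (hasFDerivAt_const b p)
    have h2 := congrArg (fun L => L a) this.fderiv
    refine Eq.trans h2 ?_
    simp
  have hs : IsSymmSndFDerivAt ℝ f p := by
    apply hf.contDiffAt.isSymmSndFDerivAt
    simp
    norm_cast
  rw [key, key, hs v w]

lemma curv {n : ℕ} {g P Q : P3 → Mat n} (hg : ContDiff ℝ (⊤ : ℕ∞) g)
    (hP : Differentiable ℝ P) (hQ : Differentiable ℝ Q) (τ : ℂ) (x y t : P3)
    (h1 : ∀ p, τ • dd y g p - (dd t g p + dd x g p) = P p * g p)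
    (h2 : ∀ p, τ • (dd t g p - dd x g p) - dd y g p = Q p * g p)
    (p : P3) (hu : IsUnit (g p)) :
    τ • (dd y Q p - (dd t P p - dd x P p)) =
      (dd t Q p + dd x Q p) - dd y P p - (Q p * P p - P p * Q p) := by
  have hgd : Differentiable ℝ g := hg.differentiable (by simp)
  have hd := fun v => dd_diff hg v
  have e1 : ∀ v, τ • dd v (dd y g) p - (dd v (dd t g) p + dd v (dd x g) p)
      = dd v P p * g p + P p * dd v g p := by
    intro v
    rw [← dd_mul hP hgd, ← funext h1, dd_sub (f := fun r => τ • dd y g r) (g := fun r => dd t g r + dd x g r)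
      ((hd y).const_smul τ) ((hd t).add (hd x)),
      dd_smul (hd y), dd_add (hd t) (hd x)]
  have e2 : ∀ v, τ • (dd v (dd t g) p - dd v (dd x g) p) - dd v (dd y g) p
      = dd v Q p * g p + Q p * dd v g p := by
    intro v
    rw [← dd_mul hQ hgd, ← funext h2, dd_sub (f := fun r => τ • (dd t g r - dd x g r)) (g := dd y g)
      (((hd t).sub (hd x)).const_smul τ) (hd y),
      dd_smul (f := fun r => dd t g r - dd x g r) ((hd t).sub (hd x)), dd_sub (hd t) (hd x)]
  apply hu.mul_right_cancel
  have c1 := dd_comm hg x y p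
  have c2 := dd_comm hg x t p
  have c3 := dd_comm hg y t p
  have a1 := e1 x
  have a2 := e1 y
  have a3 := e1 t
  have b1 := e2 x
  have b2 := e2 y
  have b3 := e2 t
  rw [c1, c2] at a1 b1
  rw [c3] at a2 b2
  have hP' : Q p * (τ • dd y g p - (dd t g p + dd x g p)) = Q p * (P p * g p) := by rw [h1]
  have hQ' : P p * (τ • (dd t g p - dd x g p) - dd y g p) = P p * (Q p * g p) := by rw [h2]
  simp only [mul_sub, mul_add, mul_smul_comm, sub_mul, add_mul, smul_mul_assoc, mul_assoc] at *
  -- D1 (Q g) - D2 (P g) = 0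
  linear_combination (norm := module) -τ • b2 + b3 + b1 + τ • (a3 - a1) - a2 - hP' + hQ'

lemma aff {n : ℕ} (U : Set ℂ) (hUne : U.Nonempty) (hUo : IsOpen U) (X Y : Mat n)
    (h : ∀ τ ∈ U, τ • X = Y) : X = 0 ∧ Y = 0 := by
  obtain ⟨a, ha⟩ := hUne
  have : ∃ b ∈ U, b ≠ a := by
    have hn : (nhdsWithin a {a}ᶜ).NeBot := inferInstance
    have h1 : U ∈ nhdsWithin a {a}ᶜ := mem_nhdsWithin_of_mem_nhds (hUo.mem_nhds ha)
    obtain ⟨b, hb1, hb2⟩ := hn.nonempty_of_mem (Filter.inter_mem h1 self_mem_nhdsWithin)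
    exact ⟨b, hb1, hb2⟩
  obtain ⟨b, hb, hne⟩ := this
  have h0 : (b - a) • X = 0 := by rw [sub_smul, h b hb, h a ha, sub_self]
  have hX : X = 0 := (smul_eq_zero.mp h0).resolve_left (sub_ne_zero.mpr hne)
  exact ⟨hX, by rw [← h a ha, hX, smul_zero]⟩

/-- A family `ψ(·,τ)`, `τ ∈ U`, of `GL(n,ℂ)`-valued maps satisfying
`τ∂_yψ − ∂_ξψ = Pψ`, `τ∂_ηψ − ∂_yψ = Qψ` with `τ`-independent `P`, `Q`, and the reality
condition `ψ(·,τ̄)*ψ(·,τ) = 1`, produces anti-Hermitian `P`, `Q`, and the fields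
`A_t = A_x = −P/2`, `A_y = −Q/2`, `φ = Q/2` solve the space-time monopole equation. -/
theorem monopole_from_ward_frame {n : ℕ} (U : Set ℂ)
    (hUne : U.Nonempty) (hUo : IsOpen U) (hU0 : (0 : ℂ) ∉ U)
    (hUc : ∀ τ ∈ U, conj τ ∈ U)
    (ψ : P3 → ℂ → Mat n)
    (hψs : ContDiffOn ℝ (⊤ : ℕ∞) (fun q : P3 × ℂ => ψ q.1 q.2) {q : P3 × ℂ | q.2 ∈ U})
    (hψgl : ∀ (p : P3) (τ : ℂ), τ ∈ U → IsUnit (ψ p τ))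
    (P Q : P3 → Mat n) (hPs : ContDiff ℝ (⊤ : ℕ∞) P) (hQs : ContDiff ℝ (⊤ : ℕ∞) Q)
    (heq : ∀ τ ∈ U, ∀ p : P3,
      τ • pdy (fun r => ψ r τ) p - pdxi (fun r => ψ r τ) p = P p * ψ p τ ∧
      τ • pdeta (fun r => ψ r τ) p - pdy (fun r => ψ r τ) p = Q p * ψ p τ)
    (hreal : ∀ τ ∈ U, ∀ p : P3, (ψ p (conj τ))ᴴ * ψ p τ = 1) :
    (∀ p : P3, (P p)ᴴ = -(P p)) ∧ (∀ p : P3, (Q p)ᴴ = -(Q p)) ∧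
      MonopoleEq (fun p => -((2⁻¹ : ℂ) • P p)) (fun p => -((2⁻¹ : ℂ) • Q p))
        (fun p => -((2⁻¹ : ℂ) • P p)) (fun p => (2⁻¹ : ℂ) • Q p) := by
  -- PROOF
  have hg : ∀ τ ∈ U, ContDiff ℝ (⊤ : ℕ∞) (fun r => ψ r τ) := by
    intro τ hτ
    rw [← contDiffOn_univ]
    exact hψs.comp (s := Set.univ) (f := fun r : P3 => (r, τ))
      (contDiff_id.prodMk contDiff_const).contDiffOn (fun r _ => hτ)
  have hgd : ∀ τ ∈ U, Differentiable ℝ (fun r => ψ r τ) := fun τ hτ =>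
    (hg τ hτ).differentiable (by simp)
  have hPd : Differentiable ℝ P := hPs.differentiable (by simp)
  have hQd : Differentiable ℝ Q := hQs.differentiable (by simp)
  have E1 : ∀ τ ∈ U, ∀ p, τ • dd (0, 1, 0) (fun r => ψ r τ) p -
      (dd (0, 0, 1) (fun r => ψ r τ) p + dd (1, 0, 0) (fun r => ψ r τ) p) = P p * ψ p τ := by
    intro τ hτ p
    rw [← pdx_eq_dd (hgd τ hτ), ← pdy_eq_dd (hgd τ hτ), ← pdt_eq_dd (hgd τ hτ)]
    exact (heq τ hτ p).1
  have E2 : ∀ τ ∈ U, ∀ p, τ • (dd (0, 0, 1) (fun r => ψ r τ) p - dd (1, 0, 0) (fun r => ψ r τ) p) -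
      dd (0, 1, 0) (fun r => ψ r τ) p = Q p * ψ p τ := by
    intro τ hτ p
    rw [← pdx_eq_dd (hgd τ hτ), ← pdy_eq_dd (hgd τ hτ), ← pdt_eq_dd (hgd τ hτ)]
    exact (heq τ hτ p).2
  obtain ⟨a, ha⟩ := hUne
  have hac := hUc a ha
  have R : ∀ v p, (dd v (fun r => ψ r (conj a)) p)ᴴ * ψ p a +
      (ψ p (conj a))ᴴ * dd v (fun r => ψ r a) p = 0 := by
    intro v p
    obtain ⟨d, e⟩ := dd_star (hgd _ hac) v p
    rw [← e, ← dd_mul d (hgd a ha), funext (hreal a ha)]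
    simp [dd]
  have anti : ∀ p (X : Mat n), (X * ψ p (conj a))ᴴ * ψ p a + (ψ p (conj a))ᴴ * (X * ψ p a) = 0 →
      Xᴴ = -X := by
    intro p X h
    have hu := hψgl p a ha
    have hu' : IsUnit (ψ p (conj a))ᴴ := (hψgl p _ hac).star
    rw [eq_neg_iff_add_eq_zero]
    apply hu.mul_right_cancel
    apply hu'.mul_left_cancel
    rw [Matrix.conjTranspose_mul] at h
    rw [add_mul, mul_add, zero_mul, mul_zero, ← mul_assoc]
    exact h
  refine ⟨fun p => anti p _ ?_, fun p => anti p _ ?_, fun p => ?_⟩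
  · rw [← E1 a ha, ← E1 _ hac]
    have r1 := R (1, 0, 0) p
    have r2 := R (0, 1, 0) p
    have r3 := R (0, 0, 1) p
    simp only [Matrix.conjTranspose_sub, Matrix.conjTranspose_add, Matrix.conjTranspose_smul,
      RCLike.star_def, Complex.conj_conj, mul_sub, mul_add, mul_smul_comm, sub_mul, add_mul,
      smul_mul_assoc] at *
    linear_combination (norm := module) a • r2 - r1 - r3
  · rw [← E2 a ha, ← E2 _ hac]
    have r1 := R (1, 0, 0) p
    have r2 := R (0, 1, 0) p
    have r3 := R (0, 0, 1) p
    simp only [Matrix.conjTranspose_sub, Matrix.conjTranspose_add, Matrix.conjTranspose_smul,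
      RCLike.star_def, Complex.conj_conj, mul_sub, mul_add, mul_smul_comm, sub_mul, add_mul,
      smul_mul_assoc] at *
    linear_combination (norm := module) a • (r3 - r1) - r2
  · obtain ⟨k1, k2⟩ := aff U ⟨a, ha⟩ hUo _ _ (fun τ hτ =>
      curv (hg τ hτ) hPd hQd τ (1, 0, 0) (0, 1, 0) (0, 0, 1) (E1 τ hτ) (E2 τ hτ) p (hψgl p τ hτ))
    have dP : Differentiable ℝ (fun p => (2⁻¹ : ℂ) • P p) := hPd.const_smul (2⁻¹ : ℂ)
    have dQ : Differentiable ℝ (fun p => (2⁻¹ : ℂ) • Q p) := hQd.const_smul (2⁻¹ : ℂ)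
    have nP : Differentiable ℝ (fun p => -((2⁻¹ : ℂ) • P p)) := dP.neg
    have nQ : Differentiable ℝ (fun p => -((2⁻¹ : ℂ) • Q p)) := dQ.neg
    unfold MonopoleEqAt brk
    rw [pdx_eq_dd nQ, pdx_eq_dd nP, pdx_eq_dd dQ, pdy_eq_dd nP, pdy_eq_dd dQ,
      pdt_eq_dd nP, pdt_eq_dd nQ, pdt_eq_dd dQ]
    simp only [dd_neg, dd_smul hPd, dd_smul hQd, neg_mul, mul_neg, smul_mul_assoc,
      mul_smul_comm]
    refine ⟨?_, ?_, ?_⟩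
    · linear_combination (norm := module) (2⁻¹ : ℂ) • k2
    · linear_combination (norm := module) (2⁻¹ : ℂ) • k1
    · linear_combination (norm := module) -(2⁻¹ : ℂ) • k2
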